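/- Let τ be a complex number with Im τ > 0, let q = e^{2πiτ}, let m, n be positive integers, and let y₁, y₂, …, y_n be complex numbers with y₁ + y₂ + ⋯ + y_n = 0. Then G_{m,n}(y₁/(m²nτ), …, y_n/(m²nτ) | −1/(m²nτ)) = ((m²n)^{n/2} / (−iτ)^{(1−n)/2}) · e^{(y₁²+⋯+y_n²)i/(m²nπτ)} · ∑_{k=0}^{n-1} q^{−m²k²/2} ∑_{r₁,…,r_n ∈ ℤ, r₁+⋯+r_n = k} q^{m²n(r₁²+⋯+r_n²)/2} e^{−2i(r₁y₁+⋯+r_ny_n)}. -/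

import Mathlib

open scoped BigOperators

/-- G_{m,n}(y₁,…,y_n|τ) = mn · ∑_{r₁+⋯+r_n=0} e^{2πiτ(r₁²+⋯+r_n²)/2} e^{2i(r₁y₁+⋯+r_ny_n)}. -/
noncomputable def G (m n : ℕ) (y : Fin n → ℂ) (τ : ℂ) : ℂ :=
  (m : ℂ) * (n : ℂ) * ∑' r : {r : Fin n → ℤ // ∑ j, r j = 0},
    Complex.exp (2 * Real.pi * Complex.I * τ * ((∑ j, ((r.1 j : ℂ)) ^ 2) / 2)) *
    Complex.exp (2 * Complex.I * ∑ j, (r.1 j : ℂ) * y j)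

/-!
By the functional equation of Jacobi's theta function, each factor of `∏ⱼ θ(wⱼ + x | -1/T)` is a
constant multiple of a sum of Gaussians centred at the integers, so the product is a sum of
Gaussians centred at the points `r ∈ ℤⁿ`. When `∑ wⱼ = 0`, Pythagoras splits every such Gaussian
into a factor on the hyperplane `∑ vⱼ = 0` and a factor on the diagonal, which depends on `x` and
`K = ∑ rⱼ` only. The hyperplane factors sum to a theta series that depends only on the class of `K`
modulo `n`; for a fixed class the diagonal factors sum to a one-dimensional theta function with
constant term `1`, up to normalization. Integrating over `x ∈ [0, 1]` thus leaves the `n` hyperplane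
series on one side and, on the other, the terms of the product of theta series with `∑ rⱼ = 0`.
-/

section Series

theorem summable_norm_and_hasSum_prod_pi {R ι κ : Type*} [NormedCommRing R] [CompleteSpace R]
    [hι : Fintype ι] (f : ι → κ → R) (hf : ∀ j, Summable fun i => ‖f j i‖) :
    (Summable fun r : ι → κ => ‖∏ j, f j (r j)‖) ∧
      HasSum (fun r : ι → κ => ∏ j, f j (r j)) (∏ j, ∑' i, f j i) := by
  revert f
  refine Fintype.induction_empty_option ?_ ?_ ?_ ι (h_fintype := hι)
  · intro α β _ e ih f hf
    let _ : Fintype α := .ofEquiv β e.symm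
    obtain ⟨hnorm, hsum⟩ := ih (fun a => f (e a)) fun a => hf (e a)
    let e' : (α → κ) ≃ (β → κ) := e.arrowCongr (.refl κ)
    have hreindex (r : α → κ) : ∏ a, f (e a) (r a) = ∏ b, f b (e' r b) := by
      simp [e', ← e.prod_comp]
    simp only [hreindex, e.prod_comp fun b => ∑' i, f b i] at hnorm hsum
    exact ⟨e'.summable_iff.1 hnorm, e'.hasSum_iff.1 hsum⟩
  · exact fun _ _ => ⟨(hasSum_fintype _).summable, by simp⟩
  · intro α _ ih f hf
    obtain ⟨hnorm, hsum⟩ := ih (fun a => f (some a)) fun a => hf (some a)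
    have hnorm_mul := (hf none).mul_norm hnorm
    have hsum_mul := (hf none).of_norm.hasSum.mul hsum hnorm_mul.of_norm
    let e : κ × (α → κ) ≃ (Option α → κ) := (Equiv.piOptionEquivProd (β := fun _ => κ)).symm
    have hsplit (p : κ × (α → κ)) :
        ∏ j, f j (e p j) = f none p.1 * ∏ a, f (some a) (p.2 a) := Fintype.prod_option _
    rw [← e.summable_iff, ← e.hasSum_iff, Fintype.prod_option]
    simp only [Function.comp_def, hsplit]
    exact ⟨hnorm_mul, hsum_mul⟩

theorem tsum_int_eq_sum_range_tsum {E : Type*} [AddCommGroup E] [UniformSpace E]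
    [IsUniformAddGroup E] [CompleteSpace E] [T2Space E] {f : ℤ → E} (hf : Summable f) (n : ℕ)
    [NeZero n] : ∑' K, f K = ∑ k ∈ Finset.range n, ∑' l : ℤ, f (k + l * n) := by
  let e := (Equiv.prodComm (Fin n) ℤ).trans (Int.divModEquiv n).symm
  have hf' : Summable fun p => f (e p) := e.summable_iff.2 hf
  rw [← e.tsum_eq, hf'.tsum_prod, tsum_fintype, Finset.sum_range]
  simp [e, add_comm]

theorem sum_add_sq_of_sum_eq_zero {R ι : Type*} [CommRing R] [Fintype ι] {v : ι → R}
    (hv : ∑ j, v j = 0) (x : R) :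
    ∑ j, (v j + x) ^ 2 = ∑ j, v j ^ 2 + Fintype.card ι * x ^ 2 := by
  simp only [add_sq, Finset.sum_add_distrib, ← Finset.sum_mul, ← Finset.mul_sum, hv, mul_zero,
    zero_mul, add_zero, Finset.sum_const, Finset.card_univ, nsmul_eq_mul]

end Series

section FourierSeries

open Complex

theorem integral_exp_two_pi_int_mul (d : ℤ) :
    ∫ x in (0 : ℝ)..1, cexp (2 * Real.pi * I * d * x) = if d = 0 then 1 else 0 := by
  split_ifs with hd
  · simp [hd]
  · have hc : 2 * (Real.pi : ℂ) * I * d ≠ 0 := by simp [hd, Real.pi_ne_zero]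
    have hperiod : cexp (2 * Real.pi * I * d * (1 : ℝ)) = 1 :=
      exp_eq_one_iff.2 ⟨d, by push_cast; ring⟩
    rw [integral_exp_mul_complex hc, hperiod]
    simp

theorem integral_tsum_mul_exp_two_pi {ι : Type*} [Countable ι] {c : ι → ℂ} (hc : Summable c)
    (d : ι → ℤ) :
    ∫ x in (0 : ℝ)..1, ∑' i, c i * cexp (2 * Real.pi * I * d i * x) =
      ∑' i : {i // d i = 0}, c i := by
  have hnorm (i : ι) (x : ℝ) : ‖c i * cexp (2 * Real.pi * I * d i * x)‖ = ‖c i‖ := by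
    rw [norm_mul, show 2 * (Real.pi : ℂ) * I * d i * x = ((2 * Real.pi * d i * x : ℝ) : ℂ) * I by
      push_cast; ring, norm_exp_ofReal_mul_I, mul_one]
  have hsum := intervalIntegral.hasSum_integral_of_dominated_convergence (a := 0) (b := 1)
    (μ := MeasureTheory.volume) (F := fun i (x : ℝ) => c i * cexp (2 * Real.pi * I * d i * x))
    (fun i _ => ‖c i‖) (fun i => by fun_prop)
    (fun i => .of_forall fun x _ => (hnorm i x).le) (.of_forall fun _ _ => hc.norm) (by simp)
    (.of_forall fun x _ => (Summable.of_norm (by simpa only [hnorm] using hc.norm)).hasSum)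
  refine hsum.tsum_eq.symm.trans (Eq.trans (tsum_congr fun i => ?_)
    (tsum_subtype {i | d i = 0} c).symm)
  rw [intervalIntegral.integral_const_mul, integral_exp_two_pi_int_mul]
  simp [Set.indicator_apply]

end FourierSeries

section JacobiTheta

open Complex

theorem im_neg_one_div_pos {T : ℂ} (hT : 0 < T.im) : 0 < (-1 / T).im := by
  simpa [neg_div, inv_neg] using UpperHalfPlane.im_inv_neg_coe_pos ⟨T, hT⟩

theorem im_natCast_mul_pos {n : ℕ} (hn : 0 < n) {T : ℂ} (hT : 0 < T.im) :
    0 < ((n : ℂ) * T).im := by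
  simpa using mul_pos (Nat.cast_pos.2 hn : (0 : ℝ) < n) hT

theorem jacobiTheta₂_term_add (l : ℤ) (z x T : ℂ) :
    jacobiTheta₂_term l (z + x) T = jacobiTheta₂_term l z T * cexp (2 * Real.pi * I * l * x) := by
  rw [jacobiTheta₂_term, jacobiTheta₂_term, ← Complex.exp_add]
  ring_nf

theorem integral_jacobiTheta₂_add (z : ℂ) {T : ℂ} (hT : 0 < T.im) :
    ∫ x in (0 : ℝ)..1, jacobiTheta₂ (z + x) T = 1 := by
  simp only [jacobiTheta₂, jacobiTheta₂_term_add]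
  rw [integral_tsum_mul_exp_two_pi ((summable_jacobiTheta₂_term_iff z T).2 hT) fun l => l,
    tsum_fintype, Fintype.sum_unique]
  simp [jacobiTheta₂_term, (default : {l : ℤ // l = 0}).2]

theorem hasSum_exp_pi_mul_sub_int_sq (u : ℂ) {T : ℂ} (hT : 0 < T.im) :
    HasSum (fun l : ℤ => cexp (Real.pi * I * T * (u - l) ^ 2))
      (jacobiTheta₂ u (-1 / T) / (-I * T) ^ (1 / 2 : ℂ)) := by
  have hT0 : T ≠ 0 := by rintro rfl; simp at hT
  have hcancel : cexp (Real.pi * I * T * u ^ 2) * cexp (-Real.pi * I * (-(T * u)) ^ 2 / T) = 1 := by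
    rw [← Complex.exp_add, exp_eq_one_iff]
    exact ⟨0, by field_simp; ring⟩
  have hfun := jacobiTheta₂_functional_equation (-(T * u)) T
  rw [show -(T * u) / T = -u by field_simp, jacobiTheta₂_neg_left u] at hfun
  convert! (hasSum_jacobiTheta₂_term (-(T * u)) hT).mul_left (cexp (Real.pi * I * T * u ^ 2))
    using 1
  · funext l
    rw [jacobiTheta₂_term, ← Complex.exp_add]
    ring_nf
  · rw [hfun]
    linear_combination
      -(1 / (-I * T) ^ (1 / 2 : ℂ) * jacobiTheta₂ u (-1 / T)) * hcancel

variable {ι : Type*} [Fintype ι]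

theorem prod_jacobiTheta₂_term (r : ι → ℤ) (z : ι → ℂ) (T : ℂ) :
    ∏ j, jacobiTheta₂_term (r j) (z j) T =
      cexp (2 * Real.pi * I * ∑ j, r j * z j + Real.pi * I * T * ∑ j, (r j : ℂ) ^ 2) := by
  simp only [jacobiTheta₂_term, ← Complex.exp_sum, Finset.mul_sum, ← Finset.sum_add_distrib]
  exact congrArg cexp (Finset.sum_congr rfl fun j _ => by ring)

theorem integral_prod_jacobiTheta₂_add (w : ι → ℂ) {T : ℂ} (hT : 0 < T.im) :
    ∫ x in (0 : ℝ)..1, ∏ j, jacobiTheta₂ (w j + x) T =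
      ∑' r : {r : ι → ℤ // ∑ j, r j = 0}, ∏ j, jacobiTheta₂_term (r.1 j) (w j) T := by
  have hsum (z : ι → ℂ) := (summable_norm_and_hasSum_prod_pi
    (fun j l => jacobiTheta₂_term l (z j) T)
    fun j => ((summable_jacobiTheta₂_term_iff _ _).2 hT).norm).2
  rw [← integral_tsum_mul_exp_two_pi (hsum w).summable fun r => ∑ j, r j]
  refine intervalIntegral.integral_congr fun x _ => (hsum fun j => w j + x).tsum_eq.symm.trans ?_
  refine tsum_congr fun r => ?_
  simp only [jacobiTheta₂_term_add, Finset.prod_mul_distrib, ← Complex.exp_sum, ← Finset.mul_sum,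
    ← Finset.sum_mul, Int.cast_sum]

end JacobiTheta

section RootLattice

open Complex

variable {ι : Type*} [Fintype ι]

/-- The Gaussian sum `∑ exp (π i T ∑ⱼ (wⱼ - vⱼ)²)` over the vectors `v` of the coset, indexed by
`K` modulo `n`, of the root lattice `Aₙ₋₁` in its dual, where `n = card ι`. These `v` are the
orthogonal projections `r - K / n` to the hyperplane `∑ⱼ vⱼ = 0` of the integer vectors `r` with
`∑ⱼ rⱼ = K`. -/
noncomputable def cosetTheta (w : ι → ℂ) (T : ℂ) (K : ℤ) : ℂ :=
  ∑' r : {r : ι → ℤ // ∑ j, r j = K},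
    cexp (Real.pi * I * T * ∑ j, (w j - (r.1 j - K / Fintype.card ι)) ^ 2)

variable [Nonempty ι]

theorem cosetTheta_add_mul_card (w : ι → ℂ) (T : ℂ) (K l : ℤ) :
    cosetTheta w T (K + l * Fintype.card ι) = cosetTheta w T K := by
  let shift : {r : ι → ℤ // ∑ j, r j = K} ≃ {r : ι → ℤ // ∑ j, r j = K + l * Fintype.card ι} :=
    (Equiv.addRight fun _ => l).subtypeEquiv fun r => by
      simp [Finset.sum_add_distrib, mul_comm]
  rw [cosetTheta, cosetTheta, ← shift.tsum_eq]
  refine tsum_congr fun r => congrArg (fun s => cexp (Real.pi * I * T * s))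
    (Finset.sum_congr rfl fun j _ => ?_)
  simp only [shift, Equiv.subtypeEquiv_apply, Equiv.coe_addRight, Pi.add_apply]
  push_cast
  field_simp
  ring

theorem sum_add_sub_sq_eq {w : ι → ℂ} (hw : ∑ j, w j = 0) {r : ι → ℤ} {K : ℤ}
    (hr : ∑ j, r j = K) (x : ℂ) :
    ∑ j, (w j + x - r j) ^ 2 = ∑ j, (w j - (r j - K / Fintype.card ι)) ^ 2 +
      Fintype.card ι * (x - K / Fintype.card ι) ^ 2 := by
  have hr' : ∑ j, (r j : ℂ) = K := by exact_mod_cast hr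
  rw [← sum_add_sq_of_sum_eq_zero (by simp [Finset.sum_sub_distrib, hw, hr', mul_div_cancel₀])]
  exact Finset.sum_congr rfl fun j _ => by ring

theorem hasSum_cosetTheta_mul_exp {w : ι → ℂ} (hw : ∑ j, w j = 0) {T : ℂ} (hT : 0 < T.im)
    (x : ℂ) :
    HasSum (fun K : ℤ => cosetTheta w T K *
        cexp (Real.pi * I * (Fintype.card ι * T) * (x - K / Fintype.card ι) ^ 2))
      (∏ j, jacobiTheta₂ (w j + x) (-1 / T) / (-I * T) ^ (1 / 2 : ℂ)) := by
  have hgauss (j : ι) := hasSum_exp_pi_mul_sub_int_sq (w j + x) hT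
  have hprod := (summable_norm_and_hasSum_prod_pi
    (fun j (l : ℤ) => cexp (Real.pi * I * T * (w j + x - l) ^ 2))
    fun j => (hgauss j).summable.norm).2
  simp only [(hgauss _).tsum_eq, ← Complex.exp_sum, ← Finset.mul_sum] at hprod
  convert! hprod.tsum_fiberwise fun r => ∑ j, r j using 2 with K
  rw [cosetTheta, ← tsum_mul_right]
  refine tsum_congr fun r => ?_
  rw [← Complex.exp_add, sum_add_sub_sq_eq hw r.2]
  congr 1
  ring

theorem prod_jacobiTheta₂_add_neg_one_div {w : ι → ℂ} (hw : ∑ j, w j = 0) {T : ℂ} (hT : 0 < T.im)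
    (x : ℂ) :
    ∏ j, jacobiTheta₂ (w j + x) (-1 / T) =
      ((-I * T) ^ (1 / 2 : ℂ)) ^ Fintype.card ι / (-I * (Fintype.card ι * T)) ^ (1 / 2 : ℂ) *
        ∑ k ∈ Finset.range (Fintype.card ι), cosetTheta w T k *
          jacobiTheta₂ (-(k / Fintype.card ι) + x) (-1 / (Fintype.card ι * T)) := by
  have hT0 : T ≠ 0 := by rintro rfl; simp at hT
  have hroot : (-I * T) ^ (1 / 2 : ℂ) ≠ 0 := by simp [cpow_eq_zero_iff, hT0]
  have hnT := im_natCast_mul_pos (Fintype.card_pos (α := ι)) hT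
  have hsum := hasSum_cosetTheta_mul_exp hw hT x
  have hclass (k : ℕ) : ∑' l : ℤ, cosetTheta w T (k + l * Fintype.card ι) *
      cexp (Real.pi * I * (Fintype.card ι * T) *
        (x - (k + l * Fintype.card ι : ℤ) / Fintype.card ι) ^ 2) =
      cosetTheta w T k * (jacobiTheta₂ (-(k / Fintype.card ι) + x) (-1 / (Fintype.card ι * T)) /
        (-I * (Fintype.card ι * T)) ^ (1 / 2 : ℂ)) := by
    rw [← (hasSum_exp_pi_mul_sub_int_sq _ hnT).tsum_eq, ← tsum_mul_left]
    refine tsum_congr fun l => ?_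
    rw [cosetTheta_add_mul_card]
    congr 3
    push_cast
    field_simp
    ring
  have hdecomp := hsum.tsum_eq.symm.trans
    (tsum_int_eq_sum_range_tsum hsum.summable (Fintype.card ι))
  simp only [hclass, ← mul_div_assoc, ← Finset.sum_div, Finset.prod_div_distrib,
    Finset.prod_const, Finset.card_univ] at hdecomp
  rw [(div_eq_iff (pow_ne_zero _ hroot)).1 hdecomp]
  ring

theorem tsum_prod_jacobiTheta₂_term_neg_one_div {w : ι → ℂ} (hw : ∑ j, w j = 0) {T : ℂ}
    (hT : 0 < T.im) :
    ∑' r : {r : ι → ℤ // ∑ j, r j = 0}, ∏ j, jacobiTheta₂_term (r.1 j) (w j) (-1 / T) =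
      ((-I * T) ^ (1 / 2 : ℂ)) ^ Fintype.card ι / (-I * (Fintype.card ι * T)) ^ (1 / 2 : ℂ) *
        ∑ k ∈ Finset.range (Fintype.card ι), cosetTheta w T k := by
  have hnT := im_neg_one_div_pos (im_natCast_mul_pos (Fintype.card_pos (α := ι)) hT)
  rw [← integral_prod_jacobiTheta₂_add w (im_neg_one_div_pos hT)]
  simp only [prod_jacobiTheta₂_add_neg_one_div hw hT]
  rw [intervalIntegral.integral_const_mul, intervalIntegral.integral_finsetSum]
  · simp only [intervalIntegral.integral_const_mul, integral_jacobiTheta₂_add _ hnT, mul_one]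
  · intro k _
    refine Continuous.intervalIntegrable (continuous_const.mul ?_) _ _
    refine continuous_iff_continuousAt.2 fun x => ?_
    exact (differentiableAt_jacobiTheta₂_fst _ hnT).continuousAt.comp
      (f := fun x : ℝ => -((k : ℂ) / Fintype.card ι) + x) (by fun_prop)

theorem cosetTheta_div {z : ι → ℂ} (hz : ∑ j, z j = 0) {T : ℂ} (hT : T ≠ 0) (K : ℤ) :
    cosetTheta (fun j => z j / T) T K =
      cexp (Real.pi * I * (∑ j, z j ^ 2) / T) *
        (cexp (-Real.pi * I * T * K ^ 2 / Fintype.card ι) *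
          ∑' r : {r : ι → ℤ // ∑ j, r j = K}, ∏ j, jacobiTheta₂_term (r.1 j) (-z j) T) := by
  rw [cosetTheta, ← mul_assoc, ← tsum_mul_left]
  refine tsum_congr fun r => ?_
  have hsq := sum_add_sub_sq_eq (w := fun j => z j / T) (by rw [← Finset.sum_div, hz, zero_div])
    r.2 0
  have hexpand : ∑ j, (z j / T + 0 - r.1 j) ^ 2 =
      (∑ j, z j ^ 2) / T ^ 2 - 2 * (∑ j, r.1 j * z j) / T + ∑ j, (r.1 j : ℂ) ^ 2 := by
    simp only [Finset.sum_div, Finset.mul_sum, ← Finset.sum_sub_distrib, ← Finset.sum_add_distrib]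
    exact Finset.sum_congr rfl fun j _ => by ring
  rw [eq_sub_iff_add_eq.2 hsq.symm, hexpand, prod_jacobiTheta₂_term, ← Complex.exp_add,
    ← Complex.exp_add]
  simp only [mul_neg, Finset.sum_neg_distrib]
  congr 1
  field_simp
  ring

end RootLattice

section ImaginaryTransformation

open Complex

theorem ofReal_mul_cpow {r : ℝ} (hr : 0 < r) {x : ℂ} (hx : x ≠ 0) (s : ℂ) :
    ((r : ℂ) * x) ^ s = (r : ℂ) ^ s * x ^ s := by
  have hr0 : (r : ℂ) ≠ 0 := ofReal_ne_zero.2 hr.ne'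
  rw [cpow_def_of_ne_zero (mul_ne_zero hr0 hx), cpow_def_of_ne_zero hr0, cpow_def_of_ne_zero hx,
    log_ofReal_mul hr hx, ← Complex.exp_add, ofReal_log hr.le, add_mul]

theorem ofReal_sq_mul_cpow_one_half {r : ℝ} (hr : 0 < r) {x : ℂ} (hx : x ≠ 0) :
    ((r : ℂ) ^ 2 * x) ^ (1 / 2 : ℂ) = r * x ^ (1 / 2 : ℂ) := by
  rw [← ofReal_pow, ofReal_mul_cpow (pow_pos hr 2) hx, ofReal_pow, one_div,
    sq_cpow_two_inv (by simpa using hr)]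

theorem mul_cpow_half_pow_div_cpow_half {τ : ℂ} (hτ : τ ≠ 0) {m n : ℕ} (hm : 0 < m) (hn : 0 < n) :
    (m : ℂ) * n * (((-I * ((m : ℂ) ^ 2 * n * τ)) ^ (1 / 2 : ℂ)) ^ n /
        (-I * (n * ((m : ℂ) ^ 2 * n * τ))) ^ (1 / 2 : ℂ)) =
      ((m : ℂ) ^ 2 * n) ^ ((n : ℂ) / 2) / (-I * τ) ^ ((1 - (n : ℂ)) / 2) := by
  have hx : -I * τ ≠ 0 := by simp [hτ]
  have hmn : (0 : ℝ) < m * n := by positivity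
  have hnum : ((-I * ((m : ℂ) ^ 2 * n * τ)) ^ (1 / 2 : ℂ)) ^ n =
      ((m : ℂ) ^ 2 * n) ^ ((n : ℂ) / 2) * (-I * τ) ^ ((n : ℂ) / 2) := by
    have hsplit := ofReal_mul_cpow (r := m ^ 2 * n) (by positivity) hx (n / 2)
    push_cast at hsplit
    rw [← hsplit, ← cpow_nat_mul]
    ring_nf
  have hden : (-I * (n * ((m : ℂ) ^ 2 * n * τ))) ^ (1 / 2 : ℂ) =
      m * n * (-I * τ) ^ (1 / 2 : ℂ) := by
    have hsqrt := ofReal_sq_mul_cpow_one_half hmn hx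
    push_cast at hsqrt
    rw [← hsqrt]
    ring_nf
  have hm0 : (m : ℂ) ≠ 0 := Nat.cast_ne_zero.2 hm.ne'
  have hn0 : (n : ℂ) ≠ 0 := Nat.cast_ne_zero.2 hn.ne'
  rw [hnum, hden, sub_div, cpow_sub _ _ hx]
  field_simp

theorem G_eq_tsum_prod_jacobiTheta₂_term (m n : ℕ) (y : Fin n → ℂ) (τ : ℂ) :
    G m n y τ = m * n * ∑' r : {r : Fin n → ℤ // ∑ j, r j = 0},
      ∏ j, jacobiTheta₂_term (r.1 j) (y j / Real.pi) τ := by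
  refine congrArg (fun s => (m : ℂ) * n * s) (tsum_congr fun r => ?_)
  rw [prod_jacobiTheta₂_term, ← Complex.exp_add]
  simp only [mul_div_assoc', ← Finset.sum_div]
  congr 1
  field_simp
  ring

theorem cosetTheta_div_div_pi {ι : Type*} [Fintype ι] [Nonempty ι] {y : ι → ℂ}
    (hy : ∑ j, y j = 0) {T : ℂ} (hT : T ≠ 0) (K : ℤ) :
    cosetTheta (fun j => y j / T / Real.pi) T K =
      cexp ((∑ j, y j ^ 2) * I / (Real.pi * T)) *
        (cexp (-Real.pi * I * T * K ^ 2 / Fintype.card ι) *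
          ∑' r : {r : ι → ℤ // ∑ j, r j = K}, cexp (Real.pi * I * T * ∑ j, (r.1 j : ℂ) ^ 2) *
            cexp (-2 * I * ∑ j, (r.1 j : ℂ) * y j)) := by
  have hz : ∑ j, y j / Real.pi = 0 := by rw [← Finset.sum_div, hy, zero_div]
  simp only [div_right_comm _ T, cosetTheta_div hz hT, div_pow, ← Finset.sum_div,
    prod_jacobiTheta₂_term, ← Complex.exp_add, mul_neg, Finset.sum_neg_distrib, mul_div_assoc']
  congr 2
  · field_simp
  · congr 1 with r
    congr 1
    field_simp
    ring

end ImaginaryTransformation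

theorem G_imaginary_transformation (τ : ℂ) (hτ : 0 < τ.im) (m n : ℕ) (hm : 0 < m) (hn : 0 < n)
    (y : Fin n → ℂ) (hy : ∑ j, y j = 0) :
    G m n (fun j => y j / ((m : ℂ) ^ 2 * n * τ)) (-1 / ((m : ℂ) ^ 2 * n * τ))
    = (((m : ℂ) ^ 2 * n) ^ ((n : ℂ) / 2) / (-Complex.I * τ) ^ ((1 - (n : ℂ)) / 2)) *
        Complex.exp ((∑ j, y j ^ 2) * Complex.I / ((m : ℂ) ^ 2 * n * Real.pi * τ)) *
        ∑ k ∈ Finset.range n,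
          Complex.exp (2 * Real.pi * Complex.I * τ * (-((m : ℂ) ^ 2 * (k : ℂ) ^ 2) / 2)) *
            ∑' r : {r : Fin n → ℤ // ∑ j, r j = (k : ℤ)},
              Complex.exp (2 * Real.pi * Complex.I * τ *
                  ((m : ℂ) ^ 2 * (n : ℂ) * (∑ j, ((r.1 j : ℂ)) ^ 2) / 2)) *
                Complex.exp (-2 * Complex.I * ∑ j, (r.1 j : ℂ) * y j) := by
  have hT : 0 < ((m : ℂ) ^ 2 * n * τ).im := by
    exact_mod_cast im_natCast_mul_pos (n := m ^ 2 * n) (by positivity) hτ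
  have hτ0 : τ ≠ 0 := by rintro rfl; simp at hτ
  have hT0 : (m : ℂ) ^ 2 * n * τ ≠ 0 := fun h => by simp [h] at hT
  have hn0 : (n : ℂ) ≠ 0 := Nat.cast_ne_zero.2 hn.ne'
  have : Nonempty (Fin n) := ⟨0, hn⟩
  have hw : ∑ j, y j / ((m : ℂ) ^ 2 * n * τ) / Real.pi = 0 := by
    simp only [← Finset.sum_div, hy, zero_div]
  rw [G_eq_tsum_prod_jacobiTheta₂_term, tsum_prod_jacobiTheta₂_term_neg_one_div hw hT,
    Fintype.card_fin, ← mul_assoc, mul_cpow_half_pow_div_cpow_half hτ0 hm hn]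
  simp only [cosetTheta_div_div_pi hy hT0, Fintype.card_fin, ← Finset.mul_sum]
  rw [← mul_assoc]
  congr 1
  · congr 2
    ring
  · refine Finset.sum_congr rfl fun k _ => ?_
    congr 2
    · push_cast
      field_simp
    · funext r
      congr 2
      ring
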